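/- (Theorem: objective error of Pro-DUCA) Suppose the problem setup holds and the sequences (x^k)_{k≥0}, (y^k)_{k≥0}, (z^k)_{k≥0} are generated by Pro-DUCA. Then for every k ≥ 1, −R_1'/k ≤ f(x̄^k) − f(x*) ≤ R_2'/k, where C_1 := √(N·λ_1(P_A))·‖y°‖, C_2 := ((‖y^0‖_A + C_1)² + α‖x^0 − x*‖² + (1/ρ)·(v^0 − v*)ᵀH̃†(v^0 − v*))^{1/2}, R_1' := C_1·(‖y^0‖_A + C_1 + C_2), and R_2' := (1/(2ρ))·(v^0 − v*)ᵀH̃†(v^0 − v*) + ½‖y^0‖²_A + (α/2)‖x^0 − x*‖². -/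

import Mathlib

open Matrix
open scoped Kronecker

abbrev Blk (m p : ℕ) := Sum (Fin m) (Fin p)
abbrev Idx (N m p : ℕ) := Fin N × Blk m p

def projK {N m p : ℕ} (y : Idx N m p → ℝ) : Idx N m p → ℝ :=
  fun ij =>
    match ij with
    | (i, Sum.inl j) => max (y (i, Sum.inl j)) 0
    | (i, Sum.inr j) => y (i, Sum.inr j)

def projKpolar {N m p : ℕ} (y : Idx N m p → ℝ) : Idx N m p → ℝ :=
  fun ij =>
    match ij with
    | (i, Sum.inl j) => min (y (i, Sum.inl j)) 0
    | (_, Sum.inr _) => 0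

def memK {N m p : ℕ} (y : Idx N m p → ℝ) : Prop :=
  ∀ (i : Fin N) (j : Fin m), 0 ≤ y (i, Sum.inl j)

def IsMPInv {n : Type*} [Fintype n] [DecidableEq n] (M Md : Matrix n n ℝ) : Prop :=
  M * Md * M = M ∧ Md * M * Md = Md ∧ (M * Md)ᵀ = M * Md ∧ (Md * M)ᵀ = Md * M

def quadForm {n : Type*} [Fintype n] (M : Matrix n n ℝ) (w : n → ℝ) : ℝ :=
  w ⬝ᵥ (M *ᵥ w)

/-!
Giving every agent its own copy of the multiplier turns the coupled constraints into the lifted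
constraint `G x - R z ∈ K°` with `R = H̃^{1/2}`, and Pro-DUCA into a proximal primal-dual method for
the lifted problem. By Moreau's decomposition, one step satisfies
`G (x (k + 1)) = A (y (k + 1) - y k) + R z (k + 1) + ρ (H - R R) y (k + 1) + σ` with `σ ∈ K°`
complementary to `y (k + 1)`. Tested against a multiplier `v` in the kernels of `H` and `R`, this
bounds `F (x (k + 1)) - F xs + ⟨v, G (x (k + 1))⟩` by the decrease of a quadratic Lyapunov function
centred at `v`.

With `v = 0` the bound telescopes to the upper estimate. With `v` the optimal consensus multiplier
`y*` the left-hand side is nonnegative, so the Lyapunov function controls `y k - y*`; the lower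
estimate follows because `F (x̄ k) - F xs ≥ -⟨y*, G (x̄ k)⟩`, and by convexity and telescoping
`⟨y*, G (x̄ k)⟩ ≤ ⟨y*, A (y k - y 0)⟩ / k`.
-/

section LinearAlgebra

variable {n : Type*} [Fintype n]

lemma dotProduct_mulVec_comm {M : Matrix n n ℝ} (hM : M.IsHermitian) (a b : n → ℝ) :
    a ⬝ᵥ (M *ᵥ b) = b ⬝ᵥ (M *ᵥ a) := by
  have hsymm : Mᵀ = M := by simpa using hM.eq
  rw [dotProduct_mulVec, ← mulVec_transpose, hsymm, dotProduct_comm]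

lemma dotProduct_mulVec_of_mulVec_eq_zero {M : Matrix n n ℝ} (hM : M.IsHermitian) {a : n → ℝ}
    (ha : M *ᵥ a = 0) (b : n → ℝ) : a ⬝ᵥ (M *ᵥ b) = 0 := by
  rw [dotProduct_mulVec_comm hM, ha, dotProduct_zero]

lemma mulVec_eq_zero_of_mul_self_mulVec_eq_zero {R : Matrix n n ℝ} (hR : R.IsHermitian)
    {v : n → ℝ} (hv : (R * R) *ᵥ v = 0) : R *ᵥ v = 0 := by
  rw [← dotProduct_self_eq_zero, dotProduct_mulVec_comm hR, mulVec_mulVec, hv, dotProduct_zero]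

lemma quadForm_nonneg {M : Matrix n n ℝ} (hM : M.PosSemidef) (a : n → ℝ) : 0 ≤ quadForm M a := by
  simpa [quadForm] using hM.dotProduct_mulVec_nonneg a

lemma sqrt_quadForm_sub_le {M : Matrix n n ℝ} (hM : M.PosSemidef) (a b : n → ℝ) :
    √(quadForm M (a - b)) ≤ √(quadForm M a) + √(quadForm M b) := by
  let seminormed := M.toSeminormedAddCommGroup hM
  let := seminormed.toNorm
  have hnorm : ∀ v : n → ℝ, ‖v‖ = √(quadForm M v) := fun v => by
    rw [quadForm, dotProduct_comm]; rfl
  have htri : ‖a - b‖ ≤ ‖a‖ + ‖b‖ := @norm_sub_le _ seminormed.toSeminormedAddGroup a b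
  simpa only [hnorm] using htri

lemma dotProduct_mulVec_le_sqrt_mul_sqrt {M : Matrix n n ℝ} (hM : M.PosSemidef) (a b : n → ℝ) :
    a ⬝ᵥ (M *ᵥ b) ≤ √(quadForm M a) * √(quadForm M b) := by
  let seminormed := M.toSeminormedAddCommGroup hM
  let := seminormed.toNorm
  let := M.toInnerProductSpace hM
  have hnorm : ∀ v : n → ℝ, ‖v‖ = √(quadForm M v) := fun v => by
    rw [quadForm, dotProduct_comm]; rfl
  have hinner : inner ℝ a b = a ⬝ᵥ (M *ᵥ b) := by
    rw [dotProduct_comm]; rfl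
  simpa only [hnorm, hinner] using real_inner_le_norm a b

lemma quadForm_sub_sub_quadForm_sub_le {M : Matrix n n ℝ} (hM : M.PosSemidef) (a b c : n → ℝ) :
    quadForm M (a - c) - quadForm M (b - c) ≤ 2 * ((a - c) ⬝ᵥ (M *ᵥ (a - b))) := by
  have hab := quadForm_nonneg hM (a - b)
  simp only [quadForm, mulVec_sub, dotProduct_sub, sub_dotProduct,
    dotProduct_mulVec_comm hM.1 b a, dotProduct_mulVec_comm hM.1 c a,
    dotProduct_mulVec_comm hM.1 c b] at hab ⊢
  linarith

lemma quadForm_le_mul_dotProduct_self {M : Matrix n n ℝ} (hM : M.IsHermitian)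
    {lam : ℝ} (hlam : ∀ (μ : ℝ) (v : n → ℝ), v ≠ 0 → M *ᵥ v = μ • v → μ ≤ lam) (a : n → ℝ) :
    quadForm M a ≤ lam * (a ⬝ᵥ a) := by
  classical
  have hH : (lam • (1 : Matrix n n ℝ) - M).IsHermitian := by
    rw [← diagonal_one, ← diagonal_smul]
    exact (isHermitian_diagonal _).sub hM
  have hpos : (lam • (1 : Matrix n n ℝ) - M).PosSemidef := by
    refine hH.posSemidef_iff_eigenvalues_nonneg.2 fun i => ?_
    have heig := hH.mulVec_eigenvectorBasis i
    rw [sub_mulVec, smul_mulVec, one_mulVec] at heig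
    have heigM : M *ᵥ (hH.eigenvectorBasis i).ofLp
        = (lam - hH.eigenvalues i) • (hH.eigenvectorBasis i).ofLp := by
      rw [sub_smul, ← heig, sub_sub_cancel]
    have hne : (hH.eigenvectorBasis i).ofLp ≠ 0 := by
      simpa using hH.eigenvectorBasis.orthonormal.ne_zero i
    simpa using hlam _ _ hne heigM
  have := quadForm_nonneg hpos a
  simp only [quadForm, sub_mulVec, smul_mulVec, one_mulVec, dotProduct_sub, dotProduct_smul,
    smul_eq_mul] at this
  simpa [quadForm] using this

lemma exists_inv_eq_diagonal [DecidableEq n] {D : Matrix n n ℝ} (hdiag : D.IsDiag)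
    (hpos : D.PosDef) : ∃ δ : n → ℝ, (∀ i, 0 ≤ δ i) ∧ D⁻¹ = diagonal δ := by
  refine ⟨fun i => (D i i)⁻¹, fun i => (inv_pos.2 hpos.diag_pos).le, inv_eq_right_inv ?_⟩
  have hmul : diagonal D.diag * diagonal (fun i => (D i i)⁻¹) = 1 := by
    rw [diagonal_mul_diagonal, ← diagonal_one]
    congr 1 with i
    exact mul_inv_cancel₀ hpos.diag_pos.ne'
  rwa [hdiag.diagonal_diag] at hmul

lemma mulVec_sub_mulVec_pinv_mulVec {R Rd : Matrix n n ℝ} (hR : R.IsHermitian)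
    (hRd : R * Rd * R = R) (hproj : (R * Rd)ᵀ = R * Rd) (v : n → ℝ) :
    R *ᵥ (v - R *ᵥ (Rd *ᵥ v)) = 0 := by
  have hsymm : Rᵀ = R := by simpa using hR.eq
  have hmul : R * (R * Rd) = R := by
    simpa only [transpose_mul, hproj, hsymm] using congrArg transpose hRd
  rw [mulVec_sub, mulVec_mulVec, mulVec_mulVec, Matrix.mul_assoc, hmul, sub_self]

lemma mul_mul_eq_of_mul_self_eq {R M Md : Matrix n n ℝ} (hR : R.IsHermitian) (hRM : R * R = M)
    (hMd : M * Md * M = M) : M * Md * R = R := by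
  classical
  have hzero : ((M * Md - 1) * R) * Rᴴ = 0 := by
    rw [hR.eq, Matrix.mul_assoc, hRM, Matrix.sub_mul, Matrix.one_mul, hMd, sub_self]
  have hzero' : ((M * Md - 1) * R) * ((M * Md - 1) * R)ᴴ = 0 := by
    rw [conjTranspose_mul, ← Matrix.mul_assoc, hzero, Matrix.zero_mul]
  rwa [self_mul_conjTranspose_eq_zero, Matrix.sub_mul, Matrix.one_mul, sub_eq_zero] at hzero'

-- The correction `z - z'` is the component of `z - zs` in the range of `R`: this is why the
-- pseudoinverse form measures the dual distance.
lemma exists_mulVec_eq_and_dotProduct_self_eq {R M Md : Matrix n n ℝ} (hR : R.IsHermitian)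
    (hRM : R * R = M) (hMd : M * Md * M = M) (z zs : n → ℝ) :
    ∃ z' : n → ℝ, R *ᵥ z' = R *ᵥ zs ∧
      (z - z') ⬝ᵥ (z - z') = quadForm Md (R *ᵥ z - R *ᵥ zs) := by
  set w := Md *ᵥ (R *ᵥ z - R *ᵥ zs) with hw
  have hRRw : R *ᵥ (R *ᵥ w) = R *ᵥ z - R *ᵥ zs := by
    rw [hw, ← mulVec_sub, mulVec_mulVec, mulVec_mulVec, mulVec_mulVec, hRM,
      mul_mul_eq_of_mul_self_eq hR hRM hMd]
  refine ⟨z - R *ᵥ w, by rw [mulVec_sub, hRRw, sub_sub_cancel], ?_⟩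
  rw [sub_sub_cancel, dotProduct_mulVec_comm hR, hRRw, dotProduct_comm, quadForm]

end LinearAlgebra

section Kronecker

variable {ι κ : Type*} [Fintype ι] [Fintype κ]

/-- The vector `1 ⊗ u` all of whose blocks are equal to `u`. -/
def consensus (ι : Type*) {κ : Type*} (u : κ → ℝ) : ι × κ → ℝ := fun ij => u ij.2

lemma consensus_dotProduct (u : κ → ℝ) (w : ι × κ → ℝ) :
    consensus ι u ⬝ᵥ w = ∑ j, u j * ∑ i, w (i, j) := by
  simp only [dotProduct, consensus, Fintype.sum_prod_type_right, Finset.mul_sum]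

variable [DecidableEq κ]

lemma kronecker_one_mulVec_apply (P : Matrix ι ι ℝ) (v : ι × κ → ℝ) (i : ι) (j : κ) :
    ((P ⊗ₖ (1 : Matrix κ κ ℝ)) *ᵥ v) (i, j) = (P *ᵥ fun i' => v (i', j)) i := by
  simp [mulVec, dotProduct, Fintype.sum_prod_type, one_apply]

lemma kronecker_one_mulVec_consensus (P : Matrix ι ι ℝ) (u : κ → ℝ) :
    (P ⊗ₖ (1 : Matrix κ κ ℝ)) *ᵥ consensus ι u = fun ij => (P *ᵥ 1) ij.1 * u ij.2 := by
  ext ⟨i, j⟩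
  rw [kronecker_one_mulVec_apply]
  simp [consensus, mulVec, dotProduct, Finset.sum_mul]

lemma kronecker_one_mulVec_consensus_eq_zero {P : Matrix ι ι ℝ} (hP : P *ᵥ 1 = 0) (u : κ → ℝ) :
    (P ⊗ₖ (1 : Matrix κ κ ℝ)) *ᵥ consensus ι u = 0 := by
  ext
  simp [kronecker_one_mulVec_consensus, hP]

lemma exists_eq_consensus {P : Matrix ι ι ℝ}
    (hP : ∀ v : ι → ℝ, P *ᵥ v = 0 → ∃ t : ℝ, v = fun _ => t) {v : ι × κ → ℝ}
    (hv : (P ⊗ₖ (1 : Matrix κ κ ℝ)) *ᵥ v = 0) : ∃ u, v = consensus ι u := by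
  have hconst : ∀ j, ∃ t : ℝ, (fun i => v (i, j)) = fun _ => t := fun j =>
    hP _ <| funext fun i => by rw [← kronecker_one_mulVec_apply, hv]; rfl
  choose u hu using hconst
  exact ⟨u, funext fun ij => congrFun (hu ij.2) ij.1⟩

lemma quadForm_kronecker_one_consensus (P : Matrix ι ι ℝ) (u : κ → ℝ) :
    quadForm (P ⊗ₖ (1 : Matrix κ κ ℝ)) (consensus ι u) = quadForm P 1 * ∑ j, u j ^ 2 := by
  simp only [quadForm, kronecker_one_mulVec_consensus, consensus_dotProduct, one_dotProduct,
    ← Finset.sum_mul]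
  rw [Finset.mul_sum]
  exact Finset.sum_congr rfl fun j _ => by ring

lemma sqrt_quadForm_kronecker_one_consensus_le {P : Matrix ι ι ℝ} (hP : P.PosSemidef) {lam : ℝ}
    (hlam : ∀ (μ : ℝ) (v : ι → ℝ), v ≠ 0 → P *ᵥ v = μ • v → μ ≤ lam) (u : κ → ℝ) :
    √(quadForm (P ⊗ₖ (1 : Matrix κ κ ℝ)) (consensus ι u))
      ≤ √(Fintype.card ι * lam) * √(∑ j, u j ^ 2) := by
  have hone : quadForm P 1 ≤ Fintype.card ι * lam := by
    simpa [mul_comm] using quadForm_le_mul_dotProduct_self hP.1 hlam 1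
  rw [quadForm_kronecker_one_consensus, Real.sqrt_mul (quadForm_nonneg hP 1)]
  gcongr

end Kronecker

section Cone

variable {N m p : ℕ}

/-- Membership in the polar cone `K°` of the cone `K` described by `memK`. -/
def memKpolar (σ : Idx N m p → ℝ) : Prop :=
  (∀ i j, σ (i, Sum.inl j) ≤ 0) ∧ ∀ i j, σ (i, Sum.inr j) = 0

lemma memK.dotProduct_nonpos {y σ : Idx N m p → ℝ} (hy : memK y) (hσ : memKpolar σ) :
    y ⬝ᵥ σ ≤ 0 := by
  refine Finset.sum_nonpos ?_
  rintro ⟨i, j | j⟩ -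
  · exact mul_nonpos_of_nonneg_of_nonpos (hy i j) (hσ.1 i j)
  · simp [hσ.2 i j]

lemma memK_projK (u : Idx N m p → ℝ) : memK (projK u) := fun _ _ => le_max_right _ _

lemma memKpolar_projKpolar (u : Idx N m p → ℝ) : memKpolar (projKpolar u) :=
  ⟨fun _ _ => min_le_right _ _, fun _ _ => rfl⟩

lemma projK_add_projKpolar (u : Idx N m p → ℝ) : projK u + projKpolar u = u := by
  ext ⟨i, j | j⟩ <;> simp [projK, projKpolar, max_add_min]

lemma projK_mul_projKpolar (u : Idx N m p → ℝ) : projK u * projKpolar u = 0 := by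
  ext ⟨i, j | j⟩ <;> simp [projK, projKpolar, max_mul_min]

lemma diagonal_mulVec_projK_dotProduct_projKpolar (δ u : Idx N m p → ℝ) :
    (diagonal δ *ᵥ projK u) ⬝ᵥ projKpolar u = 0 := by
  refine Finset.sum_eq_zero fun ij _ => ?_
  rw [mulVec_diagonal, mul_assoc, ← Pi.mul_apply (projK u), projK_mul_projKpolar, Pi.zero_apply,
    mul_zero]

lemma projK_diagonal_mulVec {δ : Idx N m p → ℝ} (hδ : ∀ ij, 0 ≤ δ ij) (u : Idx N m p → ℝ) :
    projK (diagonal δ *ᵥ u) = diagonal δ *ᵥ projK u := by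
  ext ⟨i, j | j⟩ <;> simp [projK, mulVec_diagonal, mul_max_of_nonneg, hδ]

lemma max_zero_sq_le {a b c : ℝ} (hc : c ≤ a + b) :
    max c 0 ^ 2 ≤ max a 0 ^ 2 + 2 * (max a 0 * b) + b ^ 2 := by
  have habs : max c 0 ≤ |max a 0 + b| :=
    max_le (by linarith [le_abs_self (max a 0 + b), le_max_left a 0]) (abs_nonneg _)
  calc max c 0 ^ 2 ≤ |max a 0 + b| ^ 2 := by gcongr
    _ = max a 0 ^ 2 + 2 * (max a 0 * b) + b ^ 2 := by rw [sq_abs]; ring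

lemma quadForm_diagonal {n : Type*} [Fintype n] [DecidableEq n] (δ v : n → ℝ) :
    quadForm (diagonal δ) v = ∑ i, δ i * v i ^ 2 :=
  Finset.sum_congr rfl fun i _ => by rw [mulVec_diagonal]; ring

lemma quadForm_projK_le {δ : Idx N m p → ℝ} (hδ : ∀ ij, 0 ≤ δ ij) {u u' b : Idx N m p → ℝ}
    (hu' : memKpolar (u' - (u + b))) :
    quadForm (diagonal δ) (projK u') ≤ quadForm (diagonal δ) (projK u)
      + 2 * ((diagonal δ *ᵥ projK u) ⬝ᵥ b) + quadForm (diagonal δ) b := by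
  have hentry : ∀ ij, projK u' ij ^ 2 ≤ projK u ij ^ 2 + 2 * (projK u ij * b ij) + b ij ^ 2 := by
    rintro ⟨i, j | j⟩
    · exact max_zero_sq_le (sub_nonpos.1 (hu'.1 i j))
    · have heq : u' (i, Sum.inr j) = u (i, Sum.inr j) + b (i, Sum.inr j) :=
        sub_eq_zero.1 (hu'.2 i j)
      simp only [projK, heq]
      exact le_of_eq (by ring)
  simp only [quadForm_diagonal, dotProduct, mulVec_diagonal, Finset.mul_sum,
    ← Finset.sum_add_distrib]
  exact Finset.sum_le_sum fun ij _ => by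
    linarith [mul_le_mul_of_nonneg_left (hentry ij) (hδ ij)]

variable {E : Type*} [AddCommGroup E] [Module ℝ E]

/-- Convexity with respect to the order of the cone `K°`: the inequality components of `G` are
convex and its equality components are affine along segments of `X`. -/
def IsKConvexOn (X : Set E) (G : E → Idx N m p → ℝ) : Prop :=
  ∀ ⦃x⦄, x ∈ X → ∀ ⦃w⦄, w ∈ X → ∀ ⦃a b : ℝ⦄, 0 ≤ a → 0 ≤ b → a + b = 1 →
    memKpolar (G (a • x + b • w) - (a • G x + b • G w))

lemma IsKConvexOn.convexOn_dotProduct {X : Set E} {G : E → Idx N m p → ℝ} (hG : IsKConvexOn X G)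
    (hX : Convex ℝ X) {v : Idx N m p → ℝ} (hv : memK v) :
    ConvexOn ℝ X fun w => v ⬝ᵥ G w := by
  refine ⟨hX, fun x hx w hw a b ha hb hab => ?_⟩
  have hpolar := hv.dotProduct_nonpos (hG hx hw ha hb hab)
  simp only [dotProduct_sub, dotProduct_add, dotProduct_smul] at hpolar
  exact sub_nonpos.1 hpolar

end Cone

section Proximal

variable {E : Type*} [AddCommGroup E] [Module ℝ E]

lemma nonneg_of_forall_mul_add_sq_mul {a b : ℝ}
    (h : ∀ t : ℝ, 0 < t → t ≤ 1 → 0 ≤ t * a + t ^ 2 * b) : 0 ≤ a := by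
  have hlim : Filter.Tendsto (fun t : ℝ => a + t * b) (nhdsWithin 0 (Set.Ioi 0)) (nhds a) := by
    have hcont : Continuous fun t : ℝ => a + t * b := by fun_prop
    simpa using (hcont.tendsto 0).mono_left nhdsWithin_le_nhds
  refine ge_of_tendsto hlim ?_
  filter_upwards [Ioc_mem_nhdsGT zero_lt_one] with t ht
  refine nonneg_of_mul_nonneg_right ?_ ht.1
  linarith [h t ht.1 ht.2]

lemma quadraticForm_convexComb (q : QuadraticForm ℝ E) (a b : E) (t : ℝ) :
    q ((1 - t) • a + t • b) = (1 - t) * q a + t * q b - t * (1 - t) * q (a - b) := by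
  have hseg : (1 - t) • a + t • b = a + t • (b - a) := by module
  have hend : q b = q a + q (b - a) + QuadraticMap.polar q a (b - a) := by
    rw [← QuadraticMap.map_add q, add_sub_cancel]
  rw [hseg, QuadraticMap.map_add q, QuadraticMap.map_smul, QuadraticMap.polar_smul_right, hend,
    ← neg_sub b a, QuadraticMap.map_neg]
  simp only [smul_eq_mul]
  ring

lemma le_of_isMinOn_prox {X : Set E} {F Ψ : E → ℝ} (hF : ConvexOn ℝ X F) {q : QuadraticForm ℝ E}
    {α a b : ℝ} {x w c : E} (hx : x ∈ X) (hw : w ∈ X)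
    (hmin : IsMinOn (fun w => F w + Ψ w + α / 2 * q (w - c)) X x)
    (hΨ : ∀ t : ℝ, 0 < t → t ≤ 1 → Ψ ((1 - t) • x + t • w) ≤ Ψ x + t * a + t ^ 2 * b) :
    F x ≤ F w + a + α / 2 * (q (c - w) - q (x - w) - q (x - c)) := by
  suffices h : 0 ≤ F w + a + α / 2 * (q (c - w) - q (x - w) - q (x - c)) - F x by linarith
  refine nonneg_of_forall_mul_add_sq_mul (b := b + α / 2 * q (x - w)) fun t ht ht1 => ?_
  have ht1' : 0 ≤ 1 - t := sub_nonneg.2 ht1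
  have hle := hmin (hF.1 hx hw ht1' ht.le (sub_add_cancel 1 t))
  have hFt := hF.2 hx hw ht1' ht.le (sub_add_cancel 1 t)
  have hseg : (1 - t) • x + t • w - c = (1 - t) • (x - c) + t • (w - c) := by module
  have hq := quadraticForm_convexComb q (x - c) (w - c) t
  rw [← hseg, sub_sub_sub_cancel_right] at hq
  rw [← neg_sub w c, QuadraticMap.map_neg]
  simp only [Set.mem_ofPred_eq, smul_eq_mul] at hle hFt
  rw [hq] at hle
  linarith [hΨ t ht ht1]

end Proximal

section Averages

variable {E : Type*} [AddCommGroup E] [Module ℝ E]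

lemma sum_Icc_one_le_sub {a V : ℕ → ℝ} (h : ∀ l, a (l + 1) ≤ V l - V (l + 1)) (k : ℕ) :
    ∑ l ∈ Finset.Icc 1 k, a l ≤ V 0 - V k := by
  induction k with
  | zero => simp
  | succ k ih =>
    rw [Finset.sum_Icc_succ_top (Nat.le_add_left 1 k)]
    linarith [h k]

lemma inv_card_smul_sum_mem {ι : Type*} {X : Set E} (hX : Convex ℝ X) {s : Finset ι}
    (hs : s.Nonempty) {x : ι → E} (hx : ∀ l ∈ s, x l ∈ X) :
    (s.card : ℝ)⁻¹ • ∑ l ∈ s, x l ∈ X := by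
  rw [Finset.smul_sum]
  exact hX.sum_mem (fun _ _ => by positivity) (by simp [hs.card_ne_zero]) hx

lemma map_inv_card_smul_sum_le {ι : Type*} {X : Set E} {φ : E → ℝ} (hφ : ConvexOn ℝ X φ)
    {s : Finset ι} (hs : s.Nonempty) {x : ι → E} (hx : ∀ l ∈ s, x l ∈ X) :
    φ ((s.card : ℝ)⁻¹ • ∑ l ∈ s, x l) ≤ (s.card : ℝ)⁻¹ * ∑ l ∈ s, φ (x l) := by
  rw [Finset.smul_sum, Finset.mul_sum]
  exact hφ.map_sum_le (fun _ _ => by positivity) (by simp [hs.card_ne_zero]) hx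

end Averages

section Algorithm

variable {N m p : ℕ} {E : Type*} [AddCommGroup E] [Module ℝ E]

/-- The standing assumptions on the weight matrices `A`, `H` and on a symmetric square root `R` of
`H̃`: `R * R ≤ H` and `A + ρ H` is diagonal and positive definite. -/
structure IsProxWeights {n : Type*} [Fintype n] (ρ : ℝ) (A H R : Matrix n n ℝ) : Prop where
  pos : 0 < ρ
  posSemidef : A.PosSemidef
  isHermitian : R.IsHermitian
  sub_mul_self_posSemidef : (H - R * R).PosSemidef
  isDiag : (A + ρ • H).IsDiag
  posDef : (A + ρ • H).PosDef

/-- The Pro-DUCA recursion for minimizing `F` over `X` under the constraint map `G`, with proximal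
term `α / 2 * q`; the weights are `D = A + ρ H` and `R = H̃^{1/2}`. -/
structure IsProDUCA (X : Set E) (F : E → ℝ) (G : E → Idx N m p → ℝ) (q : QuadraticForm ℝ E)
    (α ρ : ℝ) (A H R : Matrix (Idx N m p) (Idx N m p) ℝ) (x : ℕ → E)
    (y z : ℕ → Idx N m p → ℝ) : Prop where
  mem : ∀ k, x (k + 1) ∈ X
  isMinOn : ∀ k, IsMinOn (fun w => F w
    + (1 / 2) * quadForm (A + ρ • H)⁻¹ (projK ((A *ᵥ y k) - (R *ᵥ z k) + G w))
    + (α / 2) * q (w - x k)) X (x (k + 1))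
  dual_succ : ∀ k, y (k + 1)
    = projK ((A + ρ • H)⁻¹ *ᵥ ((A *ᵥ y k) - (R *ᵥ z k) + G (x (k + 1))))
  aux_succ : ∀ k, z (k + 1) = z k + ρ • (R *ᵥ y (k + 1))

/-- A multiplier on which the local copies agree, expressed by its being in the kernel of the
weights `H` and `R = H̃^{1/2}`. -/
structure IsConsensusMultiplier (H R : Matrix (Idx N m p) (Idx N m p) ℝ) (v : Idx N m p → ℝ) :
    Prop where
  memK : memK v
  mulVec_left : H *ᵥ v = 0
  mulVec_right : R *ᵥ v = 0

lemma isConsensusMultiplier_zero (H R : Matrix (Idx N m p) (Idx N m p) ℝ) :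
    IsConsensusMultiplier H R 0 :=
  ⟨fun _ _ => le_rfl, mulVec_zero H, mulVec_zero R⟩

/-- The Lyapunov function of Pro-DUCA relative to a reference point `(xs, v, zs)`. -/
noncomputable def lyapunov (q : QuadraticForm ℝ E) (α ρ : ℝ)
    (A : Matrix (Idx N m p) (Idx N m p) ℝ) (xs : E) (v zs : Idx N m p → ℝ) (x : E)
    (y z : Idx N m p → ℝ) : ℝ :=
  (1 / 2) * quadForm A (y - v) + (α / 2) * q (x - xs) + (1 / (2 * ρ)) * ((z - zs) ⬝ᵥ (z - zs))

variable {X : Set E} {F : E → ℝ} {G : E → Idx N m p → ℝ} {q : QuadraticForm ℝ E} {α ρ : ℝ}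
  {A H R : Matrix (Idx N m p) (Idx N m p) ℝ} {x : ℕ → E} {y z : ℕ → Idx N m p → ℝ}

lemma IsProDUCA.dual_succ_eq_mulVec (h : IsProDUCA X F G q α ρ A H R x y z)
    (hW : IsProxWeights ρ A H R) (k : ℕ) : y (k + 1)
      = (A + ρ • H)⁻¹ *ᵥ projK ((A *ᵥ y k) - (R *ᵥ z k) + G (x (k + 1))) := by
  obtain ⟨δ, hδ, hinv⟩ := exists_inv_eq_diagonal hW.isDiag hW.posDef
  rw [h.dual_succ, hinv, projK_diagonal_mulVec hδ]

lemma IsProDUCA.memK_succ (h : IsProDUCA X F G q α ρ A H R x y z) (k : ℕ) : memK (y (k + 1)) := by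
  rw [h.dual_succ]
  exact memK_projK _

lemma IsProDUCA.le_add_dotProduct (h : IsProDUCA X F G q α ρ A H R x y z)
    (hW : IsProxWeights ρ A H R) (hF : ConvexOn ℝ X F) (hG : IsKConvexOn X G) {w : E}
    (hw : w ∈ X) (k : ℕ) :
    F (x (k + 1)) ≤ F w + y (k + 1) ⬝ᵥ (G w - G (x (k + 1)))
      + α / 2 * (q (x k - w) - q (x (k + 1) - w) - q (x (k + 1) - x k)) := by
  obtain ⟨δ, hδ, hinv⟩ := exists_inv_eq_diagonal hW.isDiag hW.posDef
  have hmin := h.isMinOn k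
  rw [h.dual_succ_eq_mulVec hW]
  rw [hinv] at hmin ⊢
  refine le_of_isMinOn_prox (b := 1 / 2 * quadForm (diagonal δ) (G w - G (x (k + 1)))) hF
    (h.mem k) hw hmin fun t ht ht1 => ?_
  have hpolar := hG (h.mem k) hw (sub_nonneg.2 ht1) ht.le (sub_add_cancel 1 t)
  have hproj := quadForm_projK_le hδ (u := (A *ᵥ y k) - (R *ᵥ z k) + G (x (k + 1)))
    (u' := (A *ᵥ y k) - (R *ᵥ z k) + G ((1 - t) • x (k + 1) + t • w))
    (b := t • (G w - G (x (k + 1)))) (by convert hpolar using 1; module)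
  have hsmul : quadForm (diagonal δ) (t • (G w - G (x (k + 1))))
      = t ^ 2 * quadForm (diagonal δ) (G w - G (x (k + 1))) := by
    simp only [quadForm, mulVec_smul, smul_dotProduct, dotProduct_smul, smul_eq_mul]
    ring
  rw [hsmul, dotProduct_smul, smul_eq_mul] at hproj
  linarith

lemma IsProDUCA.exists_constraint_eq (h : IsProDUCA X F G q α ρ A H R x y z)
    (hW : IsProxWeights ρ A H R) (k : ℕ) : ∃ σ, memKpolar σ ∧ y (k + 1) ⬝ᵥ σ = 0 ∧
      G (x (k + 1)) = (A *ᵥ (y (k + 1) - y k)) + (R *ᵥ z (k + 1))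
        + ρ • ((H - R * R) *ᵥ y (k + 1)) + σ := by
  obtain ⟨δ, -, hinv⟩ := exists_inv_eq_diagonal hW.isDiag hW.posDef
  set u := (A *ᵥ y k) - (R *ᵥ z k) + G (x (k + 1)) with hu
  have hy := h.dual_succ_eq_mulVec hW k
  refine ⟨projKpolar u, memKpolar_projKpolar u, ?_, ?_⟩
  · rw [hy, hinv, diagonal_mulVec_projK_dotProduct_projKpolar]
  have hdet : IsUnit (A + ρ • H).det := (isUnit_iff_isUnit_det _).1 hW.posDef.isUnit
  have hDy : (A + ρ • H) *ᵥ y (k + 1) + projKpolar u = u := by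
    rw [hy, mulVec_mulVec, mul_nonsing_inv _ hdet, one_mulVec, projK_add_projKpolar]
  rw [add_mulVec, smul_mulVec] at hDy
  rw [h.aux_succ, mulVec_add, mulVec_smul, mulVec_sub, sub_mulVec, ← mulVec_mulVec, smul_sub]
  linear_combination hu - hDy

lemma IsProDUCA.dotProduct_constraint_le (h : IsProDUCA X F G q α ρ A H R x y z)
    (hW : IsProxWeights ρ A H R) {v : Idx N m p → ℝ} (hv : IsConsensusMultiplier H R v) (k : ℕ) :
    v ⬝ᵥ G (x (k + 1)) ≤ v ⬝ᵥ (A *ᵥ (y (k + 1) - y k)) := by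
  obtain ⟨σ, hσ, -, hGx⟩ := h.exists_constraint_eq hW k
  have hgap : (H - R * R) *ᵥ v = 0 := by
    rw [sub_mulVec, ← mulVec_mulVec, hv.mulVec_left, hv.mulVec_right, mulVec_zero, sub_zero]
  rw [hGx, dotProduct_add, dotProduct_add, dotProduct_add, dotProduct_smul,
    dotProduct_mulVec_of_mulVec_eq_zero hW.isHermitian hv.mulVec_right,
    dotProduct_mulVec_of_mulVec_eq_zero hW.sub_mul_self_posSemidef.1 hgap]
  simpa using hv.memK.dotProduct_nonpos hσ

lemma IsProDUCA.le_dotProduct_constraint (h : IsProDUCA X F G q α ρ A H R x y z)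
    (hW : IsProxWeights ρ A H R) (k : ℕ) :
    y (k + 1) ⬝ᵥ (A *ᵥ (y (k + 1) - y k)) + y (k + 1) ⬝ᵥ (R *ᵥ z (k + 1))
      ≤ y (k + 1) ⬝ᵥ G (x (k + 1)) := by
  obtain ⟨σ, -, hσ, hGx⟩ := h.exists_constraint_eq hW k
  have hgap := mul_nonneg hW.pos.le (quadForm_nonneg hW.sub_mul_self_posSemidef (y (k + 1)))
  rw [quadForm] at hgap
  rw [hGx, dotProduct_add, dotProduct_add, dotProduct_add, dotProduct_smul, hσ, smul_eq_mul]
  linarith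

lemma IsProDUCA.aux_distance_sub_le (h : IsProDUCA X F G q α ρ A H R x y z)
    (hW : IsProxWeights ρ A H R) (zs : Idx N m p → ℝ) (k : ℕ) :
    1 / (2 * ρ) * ((z (k + 1) - zs) ⬝ᵥ (z (k + 1) - zs)) - 1 / (2 * ρ) * ((z k - zs) ⬝ᵥ (z k - zs))
      ≤ y (k + 1) ⬝ᵥ (R *ᵥ (z (k + 1) - zs)) := by
  have hthree := quadForm_sub_sub_quadForm_sub_le PosSemidef.one (z (k + 1)) (z k) zs
  have hstep : z (k + 1) - z k = ρ • (R *ᵥ y (k + 1)) := by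
    rw [h.aux_succ, add_sub_cancel_left]
  simp only [quadForm, one_mulVec] at hthree
  rw [hstep, dotProduct_smul, smul_eq_mul, dotProduct_mulVec_comm hW.isHermitian] at hthree
  have hρ := hW.pos
  rw [← mul_sub, one_div_mul_eq_div, div_le_iff₀ (by positivity)]
  linarith

-- Relative to `v = 0` this estimates the objective itself; relative to the optimal multiplier the
-- left-hand side is nonnegative and the Lyapunov function decreases.
lemma IsProDUCA.sub_add_dotProduct_le_lyapunov_sub (h : IsProDUCA X F G q α ρ A H R x y z)
    (hW : IsProxWeights ρ A H R) (hF : ConvexOn ℝ X F) (hG : IsKConvexOn X G)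
    (hq : ∀ v, 0 ≤ q v) (hα : 0 ≤ α) {xs : E} (hxs : xs ∈ X) {v zs : Idx N m p → ℝ}
    (hv : IsConsensusMultiplier H R v) (hres : memKpolar (G xs - R *ᵥ zs)) (k : ℕ) :
    F (x (k + 1)) - F xs + v ⬝ᵥ G (x (k + 1)) ≤ lyapunov q α ρ A xs v zs (x k) (y k) (z k)
      - lyapunov q α ρ A xs v zs (x (k + 1)) (y (k + 1)) (z (k + 1)) := by
  have hprimal := h.le_add_dotProduct hW hF hG hxs k
  have hprox : 0 ≤ α / 2 * q (x (k + 1) - x k) := mul_nonneg (by positivity) (hq _)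
  have hfeas := (h.memK_succ k).dotProduct_nonpos hres
  have hdual := quadForm_sub_sub_quadForm_sub_le hW.posSemidef (y (k + 1)) (y k) v
  have haux := h.aux_distance_sub_le hW zs k
  have hcons := h.dotProduct_constraint_le hW hv k
  have hcomp := h.le_dotProduct_constraint hW k
  rw [dotProduct_sub] at hprimal hfeas
  rw [sub_dotProduct] at hdual
  rw [mulVec_sub, dotProduct_sub (y (k + 1))] at haux
  simp only [lyapunov]
  linarith

/-- A Karush–Kuhn–Tucker point of the lifted problem `G x - R z ∈ K°`, in which each agent holds its
own copy of the multiplier. -/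
structure IsLiftedKKT (X : Set E) (F : E → ℝ) (G : E → Idx N m p → ℝ)
    (H R : Matrix (Idx N m p) (Idx N m p) ℝ) (xs : E) (ys zs : Idx N m p → ℝ) : Prop where
  mem : xs ∈ X
  multiplier : IsConsensusMultiplier H R ys
  feasible : memKpolar (G xs - R *ᵥ zs)
  le_lagrangian : ∀ w ∈ X, F xs ≤ F w + ys ⬝ᵥ G w

lemma IsProDUCA.lyapunov_antitone (h : IsProDUCA X F G q α ρ A H R x y z)
    (hW : IsProxWeights ρ A H R) (hF : ConvexOn ℝ X F) (hG : IsKConvexOn X G)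
    (hq : ∀ v, 0 ≤ q v) (hα : 0 ≤ α) {xs : E} {ys zs : Idx N m p → ℝ}
    (hs : IsLiftedKKT X F G H R xs ys zs) :
    Antitone fun k => lyapunov q α ρ A xs ys zs (x k) (y k) (z k) := by
  refine antitone_nat_of_succ_le fun k => ?_
  have hstep := h.sub_add_dotProduct_le_lyapunov_sub hW hF hG hq hα hs.mem hs.multiplier
    hs.feasible k
  linarith [hs.le_lagrangian _ (h.mem k)]

lemma IsProDUCA.mem_of_mem_Icc (h : IsProDUCA X F G q α ρ A H R x y z) {k : ℕ} :
    ∀ l ∈ Finset.Icc 1 k, x l ∈ X := fun l hl => by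
  obtain ⟨l, rfl⟩ := Nat.exists_eq_add_of_le' (Finset.mem_Icc.1 hl).1
  exact h.mem l

lemma quadForm_le_two_mul_lyapunov (hq : ∀ v, 0 ≤ q v) (hα : 0 ≤ α) (hρ : 0 ≤ ρ) (xs : E)
    (v zs : Idx N m p → ℝ) (x : E) (y z : Idx N m p → ℝ) :
    quadForm A (y - v) ≤ 2 * lyapunov q α ρ A xs v zs x y z := by
  have hprox : 0 ≤ α / 2 * q (x - xs) := mul_nonneg (by positivity) (hq _)
  have haux : 0 ≤ 1 / (2 * ρ) * ((z - zs) ⬝ᵥ (z - zs)) :=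
    mul_nonneg (by positivity) (Finset.sum_nonneg fun i _ => mul_self_nonneg _)
  rw [lyapunov]
  linarith

lemma IsProDUCA.average_sub_le (h : IsProDUCA X F G q α ρ A H R x y z)
    (hW : IsProxWeights ρ A H R) (hF : ConvexOn ℝ X F) (hG : IsKConvexOn X G)
    (hq : ∀ v, 0 ≤ q v) (hα : 0 ≤ α) {xs : E} (hxs : xs ∈ X) {zs : Idx N m p → ℝ}
    (hres : memKpolar (G xs - R *ᵥ zs)) {k : ℕ} (hk : 1 ≤ k) :
    F ((k : ℝ)⁻¹ • ∑ l ∈ Finset.Icc 1 k, x l) - F xs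
      ≤ lyapunov q α ρ A xs 0 zs (x 0) (y 0) (z 0) / k := by
  have hk0 : (0 : ℝ) < k := Nat.cast_pos.2 hk
  have hsum := sum_Icc_one_le_sub (a := fun l => F (x l) - F xs) (fun l => by
    simpa using h.sub_add_dotProduct_le_lyapunov_sub hW hF hG hq hα hxs
      (isConsensusMultiplier_zero H R) hres l) k
  have hnonneg : 0 ≤ lyapunov q α ρ A xs 0 zs (x k) (y k) (z k) := by
    linarith [quadForm_nonneg hW.posSemidef (y k - 0),
      quadForm_le_two_mul_lyapunov (A := A) hq hα hW.pos.le xs 0 zs (x k) (y k) (z k)]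
  have hjensen := map_inv_card_smul_sum_le hF (Finset.nonempty_Icc.2 hk) h.mem_of_mem_Icc
  rw [Nat.card_Icc, Nat.add_sub_cancel, ← div_eq_inv_mul, le_div_iff₀ hk0] at hjensen
  simp only [Finset.sum_sub_distrib, Finset.sum_const, Nat.card_Icc, Nat.add_sub_cancel,
    nsmul_eq_mul] at hsum
  rw [le_div_iff₀ hk0]
  linarith

lemma IsProDUCA.dotProduct_average_le (h : IsProDUCA X F G q α ρ A H R x y z)
    (hW : IsProxWeights ρ A H R) (hX : Convex ℝ X) (hG : IsKConvexOn X G)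
    {v : Idx N m p → ℝ} (hv : IsConsensusMultiplier H R v) {k : ℕ} (hk : 1 ≤ k) :
    v ⬝ᵥ G ((k : ℝ)⁻¹ • ∑ l ∈ Finset.Icc 1 k, x l) ≤ v ⬝ᵥ (A *ᵥ (y k - y 0)) / k := by
  have hsum := sum_Icc_one_le_sub (a := fun l => v ⬝ᵥ G (x l)) (V := fun l => -(v ⬝ᵥ (A *ᵥ y l)))
    (fun l => by
      have hle := h.dotProduct_constraint_le hW hv l
      rw [mulVec_sub, dotProduct_sub] at hle
      linarith) k
  have hjensen := map_inv_card_smul_sum_le (hG.convexOn_dotProduct hX hv.memK)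
    (Finset.nonempty_Icc.2 hk) h.mem_of_mem_Icc
  rw [Nat.card_Icc, Nat.add_sub_cancel] at hjensen
  refine hjensen.trans ?_
  rw [div_eq_inv_mul, mulVec_sub, dotProduct_sub]
  gcongr
  linarith

lemma IsProDUCA.sqrt_quadForm_dual_sub_le (h : IsProDUCA X F G q α ρ A H R x y z)
    (hW : IsProxWeights ρ A H R) (hF : ConvexOn ℝ X F) (hG : IsKConvexOn X G)
    (hq : ∀ v, 0 ≤ q v) (hα : 0 ≤ α) {xs : E} {ys zs : Idx N m p → ℝ}
    (hs : IsLiftedKKT X F G H R xs ys zs) (k : ℕ) :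
    √(quadForm A (y k - ys)) ≤ √((√(quadForm A (y 0)) + √(quadForm A ys)) ^ 2
      + α * q (x 0 - xs) + 1 / ρ * ((z 0 - zs) ⬝ᵥ (z 0 - zs))) := by
  have hinit : quadForm A (y 0 - ys) ≤ (√(quadForm A (y 0)) + √(quadForm A ys)) ^ 2 :=
    (Real.sqrt_le_left (by positivity)).1 (sqrt_quadForm_sub_le hW.posSemidef _ _)
  refine Real.sqrt_le_sqrt ?_
  calc quadForm A (y k - ys)
      ≤ 2 * lyapunov q α ρ A xs ys zs (x k) (y k) (z k) :=
        quadForm_le_two_mul_lyapunov hq hα hW.pos.le xs ys zs _ _ _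
    _ ≤ 2 * lyapunov q α ρ A xs ys zs (x 0) (y 0) (z 0) := by
        gcongr
        exact h.lyapunov_antitone hW hF hG hq hα hs (Nat.zero_le k)
    _ = quadForm A (y 0 - ys) + α * q (x 0 - xs) + 1 / ρ * ((z 0 - zs) ⬝ᵥ (z 0 - zs)) := by
        have hρ := hW.pos.ne'
        rw [lyapunov]
        field_simp
    _ ≤ _ := by gcongr

lemma IsProDUCA.le_average_sub (h : IsProDUCA X F G q α ρ A H R x y z)
    (hW : IsProxWeights ρ A H R) (hF : ConvexOn ℝ X F) (hG : IsKConvexOn X G)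
    (hq : ∀ v, 0 ≤ q v) (hα : 0 ≤ α) {xs : E} {ys zs : Idx N m p → ℝ}
    (hs : IsLiftedKKT X F G H R xs ys zs) {k : ℕ} (hk : 1 ≤ k) :
    -(√(quadForm A ys) * (√(quadForm A (y 0)) + √(quadForm A ys)
        + √((√(quadForm A (y 0)) + √(quadForm A ys)) ^ 2 + α * q (x 0 - xs)
          + 1 / ρ * ((z 0 - zs) ⬝ᵥ (z 0 - zs)))) / k)
      ≤ F ((k : ℝ)⁻¹ • ∑ l ∈ Finset.Icc 1 k, x l) - F xs := by
  have hA := hW.posSemidef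
  have hdual : √(quadForm A (y k - y 0)) ≤ √(quadForm A (y 0)) + √(quadForm A ys)
      + √((√(quadForm A (y 0)) + √(quadForm A ys)) ^ 2 + α * q (x 0 - xs)
        + 1 / ρ * ((z 0 - zs) ⬝ᵥ (z 0 - zs))) := by
    have htri := sqrt_quadForm_sub_le hA (y k - ys) (y 0 - ys)
    rw [sub_sub_sub_cancel_right] at htri
    linarith [sqrt_quadForm_sub_le hA (y 0) ys,
      h.sqrt_quadForm_dual_sub_le hW hF hG hq hα hs k]
  have hmem := inv_card_smul_sum_mem hF.1 (Finset.nonempty_Icc.2 hk) h.mem_of_mem_Icc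
  rw [Nat.card_Icc, Nat.add_sub_cancel] at hmem
  rw [neg_le]
  calc -(F ((k : ℝ)⁻¹ • ∑ l ∈ Finset.Icc 1 k, x l) - F xs)
      ≤ ys ⬝ᵥ G ((k : ℝ)⁻¹ • ∑ l ∈ Finset.Icc 1 k, x l) := by linarith [hs.le_lagrangian _ hmem]
    _ ≤ ys ⬝ᵥ (A *ᵥ (y k - y 0)) / k := h.dotProduct_average_le hW hF.1 hG hs.multiplier hk
    _ ≤ √(quadForm A ys) * √(quadForm A (y k - y 0)) / k := by
        gcongr
        exact dotProduct_mulVec_le_sqrt_mul_sqrt hA _ _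
    _ ≤ _ := by gcongr

end Algorithm

section KroneckerWeights

variable {ι κ : Type*} [Fintype ι] [Fintype κ] [DecidableEq κ]

lemma isProxWeights_kronecker_one {ρ : ℝ} (hρ : 0 < ρ) {PA PH PHt : Matrix ι ι ℝ}
    (hPA : PA.PosSemidef) (hdiag : (PA + ρ • PH).IsDiag) (hpos : (PA + ρ • PH).PosDef)
    (hgap : (PH - PHt).PosSemidef) {R : Matrix (ι × κ) (ι × κ) ℝ} (hR : R.IsHermitian)
    (hRsq : R * R = PHt ⊗ₖ (1 : Matrix κ κ ℝ)) :
    IsProxWeights ρ (PA ⊗ₖ (1 : Matrix κ κ ℝ)) (PH ⊗ₖ (1 : Matrix κ κ ℝ)) R := by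
  classical
  have hD : PA ⊗ₖ (1 : Matrix κ κ ℝ) + ρ • (PH ⊗ₖ (1 : Matrix κ κ ℝ))
      = (PA + ρ • PH) ⊗ₖ (1 : Matrix κ κ ℝ) := by rw [add_kronecker, smul_kronecker]
  have hsub : PH ⊗ₖ (1 : Matrix κ κ ℝ) - R * R = (PH - PHt) ⊗ₖ (1 : Matrix κ κ ℝ) := by
    ext
    simp [hRsq, sub_mul]
  refine ⟨hρ, hPA.kronecker .one, hR, ?_, ?_, ?_⟩
  · rw [hsub]
    exact hgap.kronecker .one
  · rw [hD]
    exact hdiag.kronecker isDiag_one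
  · rw [hD]
    exact hpos.kronecker .one

lemma mulVec_consensus_eq_zero_of_mul_self {PHt : Matrix ι ι ℝ} (hP : PHt *ᵥ 1 = 0)
    {R : Matrix (ι × κ) (ι × κ) ℝ} (hR : R.IsHermitian)
    (hRsq : R * R = PHt ⊗ₖ (1 : Matrix κ κ ℝ)) (u : κ → ℝ) : R *ᵥ consensus ι u = 0 :=
  mulVec_eq_zero_of_mul_self_mulVec_eq_zero hR <| by
    rw [hRsq, kronecker_one_mulVec_consensus_eq_zero hP]

end KroneckerWeights

section SaddlePoint

variable {N m p : ℕ} {E : Type*}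

/-- A saddle point `(xs, u)` of the problem with the coupled constraints
`∑ i, G x (i, inl j) ≤ 0` and `∑ i, G x (i, inr j) = 0`; `u` stacks `μ*` and `λ*`. -/
structure IsSaddlePoint (X : Set E) (F : E → ℝ) (G : E → Idx N m p → ℝ) (xs : E)
    (u : Blk m p → ℝ) : Prop where
  mem : xs ∈ X
  ineq : ∀ j, ∑ i, G xs (i, Sum.inl j) ≤ 0
  eq : ∀ j, ∑ i, G xs (i, Sum.inr j) = 0
  nonneg : ∀ j, 0 ≤ u (Sum.inl j)
  slackness : ∑ j, u (Sum.inl j) * ∑ i, G xs (i, Sum.inl j) = 0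
  isMinOn : IsMinOn (fun w => F w + ∑ j, u j * ∑ i, G w (i, j)) X xs

variable {X : Set E} {F : E → ℝ} {G : E → Idx N m p → ℝ} {xs : E} {u : Blk m p → ℝ}

lemma IsSaddlePoint.le_add_dotProduct (h : IsSaddlePoint X F G xs u) {w : E} (hw : w ∈ X) :
    F xs ≤ F w + consensus (Fin N) u ⬝ᵥ G w := by
  have hmin := h.isMinOn hw
  simp only [Set.mem_ofPred_eq, Fintype.sum_sum_type, h.slackness, h.eq] at hmin
  simpa [consensus_dotProduct] using hmin

lemma sum_mulVec_apply_eq_zero {R : Matrix (Idx N m p) (Idx N m p) ℝ} (hR : R.IsHermitian)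
    (hcons : ∀ u, R *ᵥ consensus (Fin N) u = 0) (w : Idx N m p → ℝ) (j : Blk m p) :
    ∑ i, (R *ᵥ w) (i, j) = 0 := by
  have horth := dotProduct_mulVec_of_mulVec_eq_zero hR (hcons (Pi.single j 1)) w
  simpa [consensus_dotProduct, Pi.single_apply] using horth

lemma IsSaddlePoint.memKpolar_of_sub_eq_consensus (h : IsSaddlePoint X F G xs u)
    {v : Idx N m p → ℝ} (hv : ∀ j, ∑ i, v (i, j) = 0) {t : Blk m p → ℝ}
    (ht : G xs - v = consensus (Fin N) t) : memKpolar (G xs - v) := by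
  have hsum : ∀ j, N * t j = ∑ i, G xs (i, j) := fun j => by
    have hcol : ∀ i, t j = G xs (i, j) - v (i, j) := fun i => (congrFun ht (i, j)).symm
    calc N * t j = ∑ _i : Fin N, t j := by simp
      _ = ∑ i, (G xs (i, j) - v (i, j)) := Finset.sum_congr rfl fun i _ => hcol i
      _ = ∑ i, G xs (i, j) := by rw [Finset.sum_sub_distrib, hv, sub_zero]
  have hN : ∀ _ : Fin N, (0 : ℝ) < N := fun i => Nat.cast_pos.2 i.pos
  rw [ht]
  refine ⟨fun i j => ?_, fun i j => ?_⟩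
  · exact nonpos_of_mul_nonpos_right ((hsum _).trans_le (h.ineq j)) (hN i)
  · exact (mul_eq_zero.1 ((hsum _).trans (h.eq j))).resolve_left (hN i).ne'

lemma IsSaddlePoint.isLiftedKKT (h : IsSaddlePoint X F G xs u)
    {PH PHt : Matrix (Fin N) (Fin N) ℝ} (hPH : PH *ᵥ 1 = 0)
    (hPHt : ∀ v : Fin N → ℝ, PHt *ᵥ v = 0 ↔ ∃ t : ℝ, v = fun _ => t)
    {R Rd : Matrix (Idx N m p) (Idx N m p) ℝ} (hR : R.IsHermitian)
    (hRsq : R * R = PHt ⊗ₖ (1 : Matrix (Blk m p) (Blk m p) ℝ)) (hRd : IsMPInv R Rd)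
    {zs : Idx N m p → ℝ} (hzs : R *ᵥ zs = R *ᵥ (Rd *ᵥ G xs)) :
    IsLiftedKKT X F G (PH ⊗ₖ (1 : Matrix (Blk m p) (Blk m p) ℝ)) R xs
      (consensus (Fin N) u) zs := by
  have hker := mulVec_consensus_eq_zero_of_mul_self ((hPHt 1).2 ⟨1, rfl⟩) hR hRsq
  obtain ⟨hRRd, -, hproj, -⟩ := hRd
  obtain ⟨t, ht⟩ := exists_eq_consensus (κ := Blk m p) (fun v => (hPHt v).1)
    (v := G xs - R *ᵥ zs) (by
      rw [← hRsq, hzs, ← mulVec_mulVec, mulVec_sub_mulVec_pinv_mulVec hR hRRd hproj, mulVec_zero])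
  exact {
    mem := h.mem
    multiplier := ⟨fun _ j => h.nonneg j, kronecker_one_mulVec_consensus_eq_zero hPH u, hker u⟩
    feasible := h.memKpolar_of_sub_eq_consensus (sum_mulVec_apply_eq_zero hR hker zs) ht
    le_lagrangian := fun _ => h.le_add_dotProduct }

end SaddlePoint

section Separable

variable {ι : Type*} {V : ι → Type*} [∀ i, AddCommGroup (V i)] [∀ i, Module ℝ (V i)]
  {X : ∀ i, Set (V i)}

lemma convex_setOf_forall_mem (hX : ∀ i, Convex ℝ (X i)) :
    Convex ℝ {w : ∀ i, V i | ∀ i, w i ∈ X i} :=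
  fun _ hx _ hw _ _ ha hb hab i => hX i (hx i) (hw i) ha hb hab

lemma convexOn_sum_block [Fintype ι] (hX : ∀ i, Convex ℝ (X i)) {f : ∀ i, V i → ℝ}
    (hf : ∀ i, ConvexOn ℝ (X i) (f i)) {F : (∀ i, V i) → ℝ} (hF : ∀ w, F w = ∑ i, f i (w i)) :
    ConvexOn ℝ {w : ∀ i, V i | ∀ i, w i ∈ X i} F := by
  refine ⟨convex_setOf_forall_mem hX, fun x hx w hw a b ha hb hab => ?_⟩
  simp only [hF, Finset.smul_sum, ← Finset.sum_add_distrib]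
  exact Finset.sum_le_sum fun i _ => (hf i).2 (hx i) (hw i) ha hb hab

lemma isKConvexOn_block {N m p : ℕ} {V : Fin N → Type*} [∀ i, AddCommGroup (V i)]
    [∀ i, Module ℝ (V i)] {X : ∀ i, Set (V i)} {g : ∀ i, V i → Fin m → ℝ}
    (hg : ∀ i j, ConvexOn ℝ (X i) fun v => g i v j) (h : ∀ i, V i →ᵃ[ℝ] Fin p → ℝ)
    {G : (∀ i, V i) → Idx N m p → ℝ} (hGg : ∀ w i j, G w (i, Sum.inl j) = g i (w i) j)
    (hGh : ∀ w i j, G w (i, Sum.inr j) = h i (w i) j) :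
    IsKConvexOn {w : ∀ i, V i | ∀ i, w i ∈ X i} G := by
  refine fun x hx w hw a b ha hb hab => ⟨fun i j => ?_, fun i j => ?_⟩
  · simpa [hGg] using (hg i j).2 (hx i) (hw i) ha hb hab
  · simp [hGh, Convex.combo_affine_apply hab]

lemma isSaddlePoint_block {N m p : ℕ} {V : Fin N → Type*} {X : ∀ i, Set (V i)}
    {F : (∀ i, V i) → ℝ} {g : ∀ i, V i → Fin m → ℝ} {h : ∀ i, V i → Fin p → ℝ}
    {G : (∀ i, V i) → Idx N m p → ℝ} (hGg : ∀ w i j, G w (i, Sum.inl j) = g i (w i) j)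
    (hGh : ∀ w i j, G w (i, Sum.inr j) = h i (w i) j) {xs : ∀ i, V i} (hmem : ∀ i, xs i ∈ X i)
    (hineq : ∀ j, ∑ i, g i (xs i) j ≤ 0) (heq : ∀ j, ∑ i, h i (xs i) j = 0)
    {mus : Fin m → ℝ} (hmus : ∀ j, 0 ≤ mus j) {lams : Fin p → ℝ}
    (hslack : ∑ j, mus j * ∑ i, g i (xs i) j = 0)
    (hmin : ∀ w, (∀ i, w i ∈ X i) →
      F xs + (∑ j, mus j * ∑ i, g i (xs i) j) + (∑ j, lams j * ∑ i, h i (xs i) j)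
        ≤ F w + (∑ j, mus j * ∑ i, g i (w i) j) + (∑ j, lams j * ∑ i, h i (w i) j)) :
    IsSaddlePoint {w : ∀ i, V i | ∀ i, w i ∈ X i} F G xs (Sum.elim mus lams) where
  mem := hmem
  ineq := by simpa only [hGg] using hineq
  eq := by simpa only [hGh] using heq
  nonneg := hmus
  slackness := by simpa only [hGg, Sum.elim_inl] using hslack
  isMinOn w hw := by
    simpa only [Set.mem_ofPred_eq, Fintype.sum_sum_type, Sum.elim_inl, Sum.elim_inr, hGg, hGh,
      ← add_assoc] using hmin w hw

/-- The sum of the squares of all entries of a family of vectors, i.e. the squared Euclidean norm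
on the product space, as a quadratic form. -/
def sumSq {κ : ι → Type*} [Fintype ι] [∀ i, Fintype (κ i)] :
    QuadraticForm ℝ (∀ i, κ i → ℝ) :=
  QuadraticMap.pi fun _ => QuadraticMap.pi fun _ => QuadraticMap.sq

lemma sumSq_apply {κ : ι → Type*} [Fintype ι] [∀ i, Fintype (κ i)] (v : ∀ i, κ i → ℝ) :
    sumSq v = ∑ i, ∑ j, v i j ^ 2 := by
  simp [sumSq, QuadraticMap.pi_apply, sq]

lemma sumSq_nonneg {κ : ι → Type*} [Fintype ι] [∀ i, Fintype (κ i)] (v : ∀ i, κ i → ℝ) :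
    0 ≤ sumSq v := by
  rw [sumSq_apply]
  positivity

end Separable

theorem stmt3_general {N m p : ℕ} {E : Type*} [AddCommGroup E] [Module ℝ E] {X : Set E}
    {F : E → ℝ} (hF : ConvexOn ℝ X F) {G : E → Idx N m p → ℝ} (hG : IsKConvexOn X G)
    {q : QuadraticForm ℝ E} (hq : ∀ v, 0 ≤ q v) {α ρ : ℝ} (hα : 0 ≤ α) (hρ : 0 < ρ)
    {PA PH PHt : Matrix (Fin N) (Fin N) ℝ} (hPA : PA.PosSemidef)
    (hdiag : (PA + ρ • PH).IsDiag) (hpos : (PA + ρ • PH).PosDef)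
    (hgap : (PH - PHt).PosSemidef) (hPH : PH *ᵥ 1 = 0)
    (hPHt : ∀ v : Fin N → ℝ, PHt *ᵥ v = 0 ↔ ∃ t : ℝ, v = fun _ => t)
    {R Rd Md : Matrix (Idx N m p) (Idx N m p) ℝ} (hR : R.IsHermitian)
    (hRsq : R * R = PHt ⊗ₖ (1 : Matrix (Blk m p) (Blk m p) ℝ))
    (hMd : IsMPInv (PHt ⊗ₖ (1 : Matrix (Blk m p) (Blk m p) ℝ)) Md) (hRd : IsMPInv R Rd)
    {lam : ℝ} (hlam : ∀ (μ : ℝ) (v : Fin N → ℝ), v ≠ 0 → PA *ᵥ v = μ • v → μ ≤ lam)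
    {x : ℕ → E} {y z : ℕ → Idx N m p → ℝ}
    (hduca : IsProDUCA X F G q α ρ (PA ⊗ₖ (1 : Matrix (Blk m p) (Blk m p) ℝ))
      (PH ⊗ₖ (1 : Matrix (Blk m p) (Blk m p) ℝ)) R x y z)
    {xs : E} {u : Blk m p → ℝ} (hxs : IsSaddlePoint X F G xs u) {normA C R0 : ℝ}
    (hnormA : normA = √(quadForm (PA ⊗ₖ (1 : Matrix (Blk m p) (Blk m p) ℝ)) (y 0)))
    (hC : C = √(N * lam) * √(∑ j, u j ^ 2))
    (hR0 : R0 = quadForm Md (R *ᵥ z 0 - R *ᵥ (Rd *ᵥ G xs))) {k : ℕ} (hk : 1 ≤ k) :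
    -(C * (normA + C + √((normA + C) ^ 2 + α * q (x 0 - xs) + 1 / ρ * R0)) / k)
        ≤ F ((k : ℝ)⁻¹ • ∑ l ∈ Finset.Icc 1 k, x l) - F xs
      ∧ F ((k : ℝ)⁻¹ • ∑ l ∈ Finset.Icc 1 k, x l) - F xs
        ≤ (1 / (2 * ρ) * R0
          + 1 / 2 * quadForm (PA ⊗ₖ (1 : Matrix (Blk m p) (Blk m p) ℝ)) (y 0)
          + α / 2 * q (x 0 - xs)) / k := by
  obtain ⟨zs, hzs, hdist⟩ :=
    exists_mulVec_eq_and_dotProduct_self_eq hR hRsq hMd.1 (z 0) (Rd *ᵥ G xs)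
  have hW := isProxWeights_kronecker_one hρ hPA hdiag hpos hgap hR hRsq
  have hkkt := hxs.isLiftedKKT hPH hPHt hR hRsq hRd hzs
  have hCle := sqrt_quadForm_kronecker_one_consensus_le hPA hlam u
  rw [Fintype.card_fin, ← hC] at hCle
  have hlower := hduca.le_average_sub hW hF hG hq hα hkkt hk
  have hupper := hduca.average_sub_le hW hF hG hq hα hkkt.mem hkkt.feasible hk
  rw [hdist, ← hR0] at hlower
  rw [lyapunov, sub_zero, hdist, ← hR0] at hupper
  rw [← hnormA] at hlower
  have hC0 : 0 ≤ C := (Real.sqrt_nonneg _).trans hCle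
  have hnormA0 : 0 ≤ normA := hnormA ▸ Real.sqrt_nonneg _
  refine ⟨le_trans ?_ hlower, hupper.trans_eq (by ring)⟩
  gcongr

theorem stmt3
    (N m p : ℕ) (hN : 1 ≤ N) (hm : 1 ≤ m) (hp : 1 ≤ p)
    (d : Fin N → ℕ)
    (X : ∀ i : Fin N, Set (Fin (d i) → ℝ))
    (hXne : ∀ i, (X i).Nonempty) (hXcl : ∀ i, IsClosed (X i))
    (hXcv : ∀ i, Convex ℝ (X i))
    (f : ∀ i : Fin N, (Fin (d i) → ℝ) → ℝ)
    (hf : ∀ i, ConvexOn ℝ Set.univ (f i))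
    (g : ∀ i : Fin N, (Fin (d i) → ℝ) → Fin m → ℝ)
    (hg : ∀ i j, ConvexOn ℝ Set.univ (fun xi => g i xi j))
    (B : ∀ i : Fin N, Matrix (Fin p) (Fin (d i)) ℝ) (c : ∀ i : Fin N, Fin p → ℝ)
    (F : (∀ i, Fin (d i) → ℝ) → ℝ) (hF : ∀ x, F x = ∑ i, f i (x i))
    (tg : (∀ i, Fin (d i) → ℝ) → Idx N m p → ℝ)
    (htg1 : ∀ x (i : Fin N) (j : Fin m), tg x (i, Sum.inl j) = g i (x i) j)
    (htg2 : ∀ x (i : Fin N) (j : Fin p), tg x (i, Sum.inr j) = (B i *ᵥ x i + c i) j)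
    (ρ : ℝ) (hρ : 0 < ρ)
    (PA PH PHt : Matrix (Fin N) (Fin N) ℝ)
    (hPA : PA.PosSemidef) (hPH : PH.PosSemidef) (hPHt : PHt.PosSemidef)
    (hDdiag : (PA + ρ • PH).IsDiag) (hDpd : (PA + ρ • PH).PosDef)
    (hHHt : (PH - PHt).PosSemidef)
    (hPHnull : ∀ v : Fin N → ℝ, PH *ᵥ v = 0 ↔ ∃ t : ℝ, v = fun _ => t)
    (hPHtnull : ∀ v : Fin N → ℝ, PHt *ᵥ v = 0 ↔ ∃ t : ℝ, v = fun _ => t)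
    (A Htld D : Matrix (Idx N m p) (Idx N m p) ℝ)
    (hA : A = PA ⊗ₖ (1 : Matrix (Blk m p) (Blk m p) ℝ))
    (hHtld : Htld = PHt ⊗ₖ (1 : Matrix (Blk m p) (Blk m p) ℝ))
    (hD : D = A + ρ • (PH ⊗ₖ (1 : Matrix (Blk m p) (Blk m p) ℝ)))
    (Hhalf : Matrix (Idx N m p) (Idx N m p) ℝ)
    (hHhalfpsd : Hhalf.PosSemidef) (hHhalfsq : Hhalf * Hhalf = Htld)
    (Htdag : Matrix (Idx N m p) (Idx N m p) ℝ) (hHtdag : IsMPInv Htld Htdag)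
    (Hhalfdag : Matrix (Idx N m p) (Idx N m p) ℝ) (hHhalfdag : IsMPInv Hhalf Hhalfdag)
    (lam1 : ℝ)
    (hlam1ev : ∃ v : Fin N → ℝ, v ≠ 0 ∧ PA *ᵥ v = lam1 • v)
    (hlam1max : ∀ (μ : ℝ) (v : Fin N → ℝ), v ≠ 0 → PA *ᵥ v = μ • v → μ ≤ lam1)
    (x : ℕ → ∀ i, Fin (d i) → ℝ) (y z : ℕ → Idx N m p → ℝ)
    (hxX : ∀ k, ∀ i, x (k + 1) i ∈ X i)
    (hy0 : memK (y 0))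
    (hyupd : ∀ k, y (k + 1) = projK (D⁻¹ *ᵥ ((A *ᵥ y k) - (Hhalf *ᵥ z k) + tg (x (k + 1)))))
    (hzupd : ∀ k, z (k + 1) = z k + ρ • (Hhalf *ᵥ y (k + 1)))
    (α : ℝ) (hα : 0 < α)
    (hxmin : ∀ k, ∀ w, (∀ i, w i ∈ X i) →
      F (x (k + 1))
          + (1 / 2) * quadForm D⁻¹ (projK ((A *ᵥ y k) - (Hhalf *ᵥ z k) + tg (x (k + 1))))
          + (α / 2) * ∑ i, ∑ j, (x (k + 1) i j - x k i j) ^ 2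
        ≤ F w + (1 / 2) * quadForm D⁻¹ (projK ((A *ᵥ y k) - (Hhalf *ᵥ z k) + tg w))
          + (α / 2) * ∑ i, ∑ j, (w i j - x k i j) ^ 2)
    (xs : ∀ i, Fin (d i) → ℝ) (hxsX : ∀ i, xs i ∈ X i)
    (hxsg : ∀ j, (∑ i, g i (xs i) j) ≤ 0)
    (hxsh : ∀ j, (∑ i, (B i *ᵥ xs i + c i) j) = 0)
    (mus : Fin m → ℝ) (hmus : ∀ j, 0 ≤ mus j) (lams : Fin p → ℝ)
    (hcs : (∑ j, mus j * ∑ i, g i (xs i) j) = 0)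
    (hsaddle : ∀ w, (∀ i, w i ∈ X i) →
      F xs + (∑ j, mus j * ∑ i, g i (xs i) j) + (∑ j, lams j * ∑ i, (B i *ᵥ xs i + c i) j)
        ≤ F w + (∑ j, mus j * ∑ i, g i (w i) j) + (∑ j, lams j * ∑ i, (B i *ᵥ w i + c i) j))
    (ys : Idx N m p → ℝ) (hys : ∀ (i : Fin N) (j : Blk m p), ys (i, j) = Sum.elim mus lams j)
    (zstar vstar : Idx N m p → ℝ)
    (hzstar : zstar = Hhalfdag *ᵥ tg xs)
    (hvstar : vstar = Hhalf *ᵥ zstar)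
    (xbar : ℕ → ∀ i, Fin (d i) → ℝ)
    (hxbar : ∀ k (i : Fin N) (j : Fin (d i)),
      xbar k i j = (∑ l ∈ Finset.Icc 1 k, x l i j) / (k : ℝ))
    (C1 C2 : ℝ)
    (hC1 : C1 = Real.sqrt ((N : ℝ) * lam1) * Real.sqrt ((∑ j, (mus j) ^ 2) + ∑ j, (lams j) ^ 2))
    (hC2 : C2 = Real.sqrt ((Real.sqrt (quadForm A (y 0)) + C1) ^ 2
      + α * (∑ i, ∑ j, (x 0 i j - xs i j) ^ 2)
      + (1 / ρ) * quadForm Htdag ((Hhalf *ᵥ z 0) - vstar)))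
    :
    ∀ k : ℕ, 1 ≤ k →
      -((C1 * (Real.sqrt (quadForm A (y 0)) + C1 + C2)) / (k : ℝ))
          ≤ F (xbar k) - F xs
        ∧ F (xbar k) - F xs
          ≤ ((1 / (2 * ρ)) * quadForm Htdag ((Hhalf *ᵥ z 0) - vstar)
              + (1 / 2) * quadForm A (y 0)
              + (α / 2) * ∑ i, ∑ j, (x 0 i j - xs i j) ^ 2) / (k : ℝ) := by
  intro k hk
  have hFconv : ConvexOn ℝ {w | ∀ i, w i ∈ X i} F :=
    convexOn_sum_block hXcv (fun i => (hf i).subset (Set.subset_univ _) (hXcv i)) hF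
  have hGconv : IsKConvexOn {w | ∀ i, w i ∈ X i} tg :=
    isKConvexOn_block (fun i j => (hg i j).subset (Set.subset_univ _) (hXcv i))
      (fun i => (B i).mulVecLin.toAffineMap + AffineMap.const ℝ _ (c i)) htg1 htg2
  have hduca : IsProDUCA {w | ∀ i, w i ∈ X i} F tg sumSq α ρ A
      (PH ⊗ₖ (1 : Matrix (Blk m p) (Blk m p) ℝ)) Hhalf x y z :=
    ⟨hxX, fun k w hw => by simpa [sumSq_apply, ← hD] using hxmin k w hw, hD ▸ hyupd, hzupd⟩
  have hxs : IsSaddlePoint {w | ∀ i, w i ∈ X i} F tg xs (Sum.elim mus lams) :=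
    isSaddlePoint_block (h := fun i v => B i *ᵥ v + c i) htg1 htg2 hxsX hxsg hxsh hmus
      hcs hsaddle
  have hxbar_eq : xbar k = (k : ℝ)⁻¹ • ∑ l ∈ Finset.Icc 1 k, x l := by
    ext i j
    simp [hxbar, div_eq_inv_mul]
  subst hA hHtld hzstar hvstar
  have hbounds := stmt3_general hFconv hGconv sumSq_nonneg hα.le hρ hPA hDdiag hDpd hHHt
    ((hPHnull 1).2 ⟨1, rfl⟩) hPHtnull hHhalfpsd.1 hHhalfsq hHtdag hHhalfdag hlam1max hduca hxs rfl
    (hC1.trans (by simp [Fintype.sum_sum_type])) rfl hk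
  simpa only [sumSq_apply, Pi.sub_apply, ← hxbar_eq, ← hC2] using hbounds
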